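/- arXiv:1810.11316 — 7 statements merged into one kernel-verified Lean document; each statement's English description precedes it below -/
import Mathlib

section
/- Let m = p_1^{m_1} p_2^{m_2} ⋯ p_t^{m_t}, where t ≥ 2, m_1,…,m_t are positive integers and p_1 < p_2 < ⋯ < p_t are primes. Then for all k and i with 2 ≤ k ≤ t and 1 ≤ i ≤ k−1, we have φ(m/p_i) ≥ p_k^{m_k−1}·φ(m/p_k^{m_k}), and the inequality is strict except when k = 2, (p_1, p_2) = (2, 3) and m_1 ≥ 2. -/
theorem aux_core (q r a b R : ℕ) (hq : q.Prime) (hr : r.Prime) (hqr : q < r)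
    (h1 : (q).Coprime R) (h2 : r.Coprime R) (hR : 0 < R) :
    r ^ b * Nat.totient (r ^ (b+1) * (q ^ (a+1) * R) / r ^ (b+1)) ≤
        Nat.totient (r ^ (b+1) * (q ^ (a+1) * R) / q) ∧
      (¬(q + 1 = r ∧ 1 ≤ a) →
      r ^ b * Nat.totient (r ^ (b+1) * (q ^ (a+1) * R) / r ^ (b+1)) <
        Nat.totient (r ^ (b+1) * (q ^ (a+1) * R) / q)) := by
  have hrq : r.Coprime q := (Nat.coprime_primes hr hq).2 hqr.ne'
  have e1 : r ^ (b+1) * (q ^ (a+1) * R) / r ^ (b+1) = q ^ (a+1) * R :=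
    Nat.mul_div_cancel_left _ (pow_pos hr.pos _)
  have e2 : r ^ (b+1) * (q ^ (a+1) * R) / q = r ^ (b+1) * (q ^ a * R) := by
    rw [show r ^ (b+1) * (q ^ (a+1) * R) = q * (r ^ (b+1) * (q ^ a * R)) by ring]
    exact Nat.mul_div_cancel_left _ hq.pos
  rw [e1, e2, Nat.totient_mul (h1.pow_left _),
    Nat.totient_mul (Nat.Coprime.mul_right (hrq.pow _ _) (h2.pow_left _)),
    Nat.totient_mul (h1.pow_left _), Nat.totient_prime_pow_succ hq,
    Nat.totient_prime_pow_succ hr]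
  have hphi : 0 < Nat.totient R := Nat.totient_pos.2 hR
  have hC : 0 < r ^ b * Nat.totient R := Nat.mul_pos (pow_pos hr.pos _) hphi
  have f1 : r ^ b * (q ^ a * (q - 1) * Nat.totient R)
      = (r ^ b * Nat.totient R) * (q ^ a * (q - 1)) := by ring
  have f2 : r ^ b * (r - 1) * (Nat.totient (q ^ a) * Nat.totient R)
      = (r ^ b * Nat.totient R) * (Nat.totient (q ^ a) * (r - 1)) := by ring
  rw [f1, f2]
  have hq2 := hq.two_le
  rcases a with _ | a
  · have h : q ^ 0 * (q - 1) < Nat.totient (q ^ 0) * (r - 1) := by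
      simp; omega
    exact ⟨Nat.mul_le_mul_left _ h.le, fun _ => Nat.mul_lt_mul_of_pos_left h hC⟩
  · rw [Nat.totient_prime_pow_succ hq]
    have hD : 0 < q ^ a * (q - 1) := Nat.mul_pos (pow_pos hq.pos _) (by omega)
    have f3 : q ^ (a+1) * (q - 1) = q ^ a * (q - 1) * q := by ring
    rw [f3]
    refine ⟨Nat.mul_le_mul_left _ (Nat.mul_le_mul_left _ (by omega)), fun h => ?_⟩
    exact Nat.mul_lt_mul_of_pos_left (Nat.mul_lt_mul_of_pos_left (by omega) hD) hC


/-- Lemma 2.4: `φ(m/p_i) ≥ p_k^(m_k-1)·φ(m/p_k^(m_k))` for `i < k`, strict except when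
`k` is the second prime, `(p₁,p₂) = (2,3)` and `m₁ ≥ 2` (indices here are 0-based). -/
theorem totient_div_ge_pow_mul_totient (m t : ℕ) (p e : ℕ → ℕ) (ht : 2 ≤ t)
    (hp : ∀ i, i < t → (p i).Prime)
    (hlt : ∀ i j, i < j → j < t → p i < p j)
    (he : ∀ i, i < t → 0 < e i)
    (hm : m = ∏ i ∈ Finset.range t, p i ^ e i) :
    ∀ k i, k < t → i < k →
      p k ^ (e k - 1) * Nat.totient (m / p k ^ e k) ≤ Nat.totient (m / p i) ∧
        (¬(k = 1 ∧ p 0 = 2 ∧ p 1 = 3 ∧ 2 ≤ e 0) →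
          p k ^ (e k - 1) * Nat.totient (m / p k ^ e k) < Nat.totient (m / p i)) := by
  intro k i hk hik
  have hi : i < t := hik.trans hk
  set R := ∏ j ∈ ((Finset.range t).erase k).erase i, p j ^ e j with hRdef
  have hmR : m = p k ^ e k * (p i ^ e i * R) := by
    rw [hm, hRdef, Finset.mul_prod_erase _ (fun j => p j ^ e j),
      Finset.mul_prod_erase _ (fun j => p j ^ e j)]
    · simpa using hk
    · simp [hi, hik.ne]
  have hne : ∀ a b, a < t → b < t → a ≠ b → p a ≠ p b := by
    intro a b ha hb hab
    rcases lt_or_gt_of_ne hab with h | h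
    · exact (hlt a b h hb).ne
    · exact (hlt b a h ha).ne'
  have hcop : ∀ a, a < t → (a = k ∨ a = i) → (p a).Coprime R := by
    intro a ha hak
    refine Nat.Coprime.prod_right fun j hj => Nat.Coprime.pow_right _ ?_
    simp only [Finset.mem_erase, Finset.mem_range] at hj
    refine (Nat.coprime_primes (hp a ha) (hp j hj.2.2)).2 (hne a j ha hj.2.2 ?_)
    rcases hak with rfl | rfl
    · exact fun h => hj.2.1 h.symm
    · exact fun h => hj.1 h.symm
  have hR : 0 < R := by
    refine Finset.prod_pos fun j hj => pow_pos (hp j ?_).pos _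
    simp only [Finset.mem_erase, Finset.mem_range] at hj
    exact hj.2.2
  have key := aux_core (p i) (p k) (e i - 1) (e k - 1) R (hp i hi) (hp k hk)
    (hlt i k hik hk) (hcop i hi (Or.inr rfl)) (hcop k hk (Or.inl rfl)) hR
  rw [Nat.sub_add_cancel (he i hi), Nat.sub_add_cancel (he k hk), ← hmR] at key
  refine ⟨key.1, fun hn => key.2 ?_⟩
  rintro ⟨hs, ha⟩
  apply hn
  have hi2 : p i = 2 := by
    by_contra h
    have o1 := (hp i hi).odd_of_ne_two h
    have o2 := (hp k hk).odd_of_ne_two (by have := (hp i hi).two_le; omega)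
    rw [← hs] at o2
    obtain ⟨x, hx⟩ := o1
    obtain ⟨y, hy⟩ := o2
    omega
  have hi0 : i = 0 := by
    by_contra h
    have h1 := hlt 0 i (by omega) hi
    have h2 := (hp 0 (by omega)).two_le
    omega
  subst hi0
  have hk1 : k = 1 := by
    by_contra h
    have h1 := hlt 0 1 (by omega) (by omega)
    have h2 := hlt 1 k (by omega) hk
    omega
  subst hk1
  exact ⟨rfl, hi2, by omega, by omega⟩
end

section
/- Let m = p_1^{m_1} p_2^{m_2} ⋯ p_t^{m_t}, where t ≥ 2, m_1,…,m_t are positive integers and p_1 < p_2 < ⋯ < p_t are primes. Then for all i and k with 1 ≤ i < k ≤ t, we have φ(m/p_i) ≥ φ(m/p_k), with equality if and only if k = 2, (p_1, p_2) = (2, 3), m_1 ≥ 2 and m_2 = 1. -/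
theorem totient_aux (m t : ℕ) (p e : ℕ → ℕ)
    (hp : ∀ i, i < t → (p i).Prime)
    (hlt : ∀ i j, i < j → j < t → p i < p j)
    (he : ∀ i, i < t → 0 < e i)
    (hm : m = ∏ i ∈ Finset.range t, p i ^ e i) (i : ℕ) (hi : i < t) :
    (2 ≤ e i ∧ p i * Nat.totient (m / p i) = Nat.totient m) ∨
    (e i = 1 ∧ (p i - 1) * Nat.totient (m / p i) = Nat.totient m) := by
  have hR := Finset.mul_prod_erase (Finset.range t) (fun i => p i ^ e i) (Finset.mem_range.2 hi)
  have hcop : ¬ p i ∣ ∏ j ∈ (Finset.range t).erase i, p j ^ e j := by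
    intro h
    obtain ⟨j, hj, hd⟩ := ((hp i hi).prime.dvd_finsetProd_iff _).1 h
    rw [Finset.mem_erase, Finset.mem_range] at hj
    have h1 := (Nat.prime_dvd_prime_iff_eq (hp i hi) (hp j hj.2)).1 ((hp i hi).dvd_of_dvd_pow hd)
    rcases lt_or_gt_of_ne hj.1 with h2 | h2
    · have := hlt _ _ h2 hi; omega
    · have := hlt _ _ h2 hj.2; omega
  rw [← hm] at hR
  set R := ∏ j ∈ (Finset.range t).erase i, p j ^ e j
  obtain ⟨f, hf⟩ : ∃ f, e i = f + 1 := ⟨e i - 1, by have := he i hi; omega⟩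
  have hq : m = p i * (p i ^ f * R) := by rw [← hR, hf]; ring
  have hdiv : m / p i = p i ^ f * R := by
    rw [hq, Nat.mul_div_cancel_left _ (hp i hi).pos]
  rw [hdiv, hq]
  rcases Nat.eq_zero_or_pos f with h0 | h0
  · right
    refine ⟨by omega, ?_⟩
    rw [Nat.totient_mul_of_prime_of_not_dvd (hp i hi)]
    subst h0; simpa using hcop
  · left
    refine ⟨by omega, ?_⟩
    rw [Nat.totient_mul_of_prime_of_dvd (hp i hi)]
    exact Dvd.dvd.mul_right (dvd_pow_self _ h0.ne') _

theorem mul_cmp_aux {a b x y M : ℕ} (hM : 0 < M) (hx : a * x = M) (hy : b * y = M)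
    (hab : a ≤ b) : y ≤ x ∧ (x = y ↔ a = b) := by
  have ha : 0 < a := Nat.pos_of_ne_zero (by rintro rfl; simp at hx; omega)
  have hy0 : 0 < y := Nat.pos_of_ne_zero (by rintro rfl; simp at hy; omega)
  refine ⟨?_, ?_, ?_⟩
  · by_contra! h
    nlinarith
  · rintro rfl
    exact Nat.eq_of_mul_eq_mul_right hy0 (hx.trans hy.symm)
  · rintro rfl
    exact Nat.eq_of_mul_eq_mul_left ha (hx.trans hy.symm)

/-- Lemma 2.5: `φ(m/p_i) ≥ φ(m/p_k)` for `i < k`, with equality iff `k` is the second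
prime, `(p₁,p₂) = (2,3)`, `m₁ ≥ 2` and `m₂ = 1` (indices here are 0-based). -/
theorem totient_div_prime_antitone (m t : ℕ) (p e : ℕ → ℕ) (ht : 2 ≤ t)
    (hp : ∀ i, i < t → (p i).Prime)
    (hlt : ∀ i j, i < j → j < t → p i < p j)
    (he : ∀ i, i < t → 0 < e i)
    (hm : m = ∏ i ∈ Finset.range t, p i ^ e i) :
    ∀ i k, i < k → k < t →
      Nat.totient (m / p k) ≤ Nat.totient (m / p i) ∧
        (Nat.totient (m / p i) = Nat.totient (m / p k) ↔
          (k = 1 ∧ p 0 = 2 ∧ p 1 = 3 ∧ 2 ≤ e 0 ∧ e 1 = 1)) := by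
  intro i k hik hk
  have hi : i < t := hik.trans hk
  have hM : 0 < Nat.totient m := by
    rw [Nat.totient_pos, hm]
    exact Finset.prod_pos fun j hj => pow_pos (hp j (Finset.mem_range.1 hj)).pos _
  have hl := hlt i k hik hk
  have h2 := (hp i hi).two_le
  rcases totient_aux m t p e hp hlt he hm i hi with ⟨hei, hxi⟩ | ⟨hei, hxi⟩ <;>
  rcases totient_aux m t p e hp hlt he hm k hk with ⟨hek, hxk⟩ | ⟨hek, hxk⟩ <;>
  obtain ⟨hA, hB⟩ := mul_cmp_aux hM hxi hxk (by omega) <;>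
  refine ⟨hA, hB.trans ⟨fun h => ?_, ?_⟩⟩
  all_goals first
    | (exfalso; omega)
    | (rintro ⟨rfl, h0, h1, h3, h4⟩
       obtain rfl : i = 0 := by omega
       omega)
    | skip
  have hpi : p i = 2 := by
    rcases (hp i hi).eq_two_or_odd with h' | h'
    · exact h'
    · rcases (hp k hk).eq_two_or_odd with h'' | h'' <;> omega
  have hi0 : i = 0 := by
    by_contra hne
    have := hlt 0 i (by omega) hi
    have := (hp 0 (by omega)).two_le
    omega
  subst hi0
  have hk1 : k = 1 := by
    by_contra hne
    have := hlt 0 1 (by omega) (by omega)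
    have := hlt 1 k (by omega) hk
    omega
  subst hk1
  exact ⟨rfl, hpi, by omega, hei, hek⟩
end

section
/- Let p_1 < p_2 < ⋯ < p_t be primes, t ≥ 1, and let {i_1, i_2, …, i_k} be any k-element subset of {1, 2, …, t}. Then p_{i_1} p_{i_2} ⋯ p_{i_k} − φ(p_{i_1} p_{i_2} ⋯ p_{i_k}) ≥ p_1 p_2 ⋯ p_k − φ(p_1 p_2 ⋯ p_k), with equality if and only if k = 1 or {i_1, i_2, …, i_k} = {1, 2, …, k}. -/
/-- The totient of a product of distinct primes. -/
lemma aux_totient (p : ℕ → ℕ) (s : Finset ℕ) (hp : ∀ i ∈ s, (p i).Prime)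
    (hinj : ∀ i ∈ s, ∀ j ∈ s, p i = p j → i = j) :
    ((Nat.totient (∏ i ∈ s, p i) : ℕ) : ℤ) = ∏ i ∈ s, ((p i : ℤ) - 1) := by
  induction s using Finset.induction_on with
  | empty => simp
  | insert a s ha ih =>
    have hpa := hp a (Finset.mem_insert_self a s)
    have hc : Nat.Coprime (p a) (∏ i ∈ s, p i) := by
      apply Nat.Coprime.prod_right
      intro i hi
      rw [Nat.coprime_primes hpa (hp i (Finset.mem_insert_of_mem hi))]
      intro h
      have := hinj a (Finset.mem_insert_self a s) i (Finset.mem_insert_of_mem hi) h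
      exact ha (this ▸ hi)
    rw [Finset.prod_insert ha, Finset.prod_insert ha, Nat.totient_mul hc, Nat.cast_mul,
      Nat.totient_prime hpa, ih (fun i hi => hp i (Finset.mem_insert_of_mem hi))
        (fun i hi j hj => hinj i (Finset.mem_insert_of_mem hi) j (Finset.mem_insert_of_mem hj)),
      Nat.cast_sub hpa.one_le, Nat.cast_one]

/-- Monotonicity, with positivity for nonempty index sets. -/
lemma aux_mono {ι : Type*} [DecidableEq ι] (a b : ι → ℤ) (s : Finset ι)
    (ha : ∀ i ∈ s, 2 ≤ a i) (hab : ∀ i ∈ s, a i ≤ b i) :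
    0 ≤ (∏ i ∈ s, a i - ∏ i ∈ s, (a i - 1)) ∧
    (∏ i ∈ s, a i - ∏ i ∈ s, (a i - 1)) ≤ (∏ i ∈ s, b i - ∏ i ∈ s, (b i - 1)) ∧
    1 ≤ ∏ i ∈ s, a i ∧ ∏ i ∈ s, a i ≤ ∏ i ∈ s, b i ∧
    (s.Nonempty → 0 < (∏ i ∈ s, a i - ∏ i ∈ s, (a i - 1))) := by
  induction s using Finset.induction_on with
  | empty => simp
  | insert x s hx ih =>
    obtain ⟨h0, h1, h2, h3, -⟩ := ih (fun i hi => ha i (Finset.mem_insert_of_mem hi))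
      (fun i hi => hab i (Finset.mem_insert_of_mem hi))
    have hax := ha x (Finset.mem_insert_self x s)
    have hbx := hab x (Finset.mem_insert_self x s)
    simp only [Finset.prod_insert hx]
    generalize ∏ i ∈ s, a i = A at *
    generalize ∏ i ∈ s, b i = B at *
    generalize ∏ i ∈ s, (a i - 1) = A' at *
    generalize ∏ i ∈ s, (b i - 1) = B' at *
    have e1 : 0 ≤ (a x - 1) * (A - A') := mul_nonneg (by linarith) h0
    have e2 : (a x - 1) * (A - A') ≤ (b x - 1) * (B - B') :=
      mul_le_mul (by linarith) h1 h0 (by linarith)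
    refine ⟨by linarith, by linarith, by nlinarith, ?_, fun _ => by linarith⟩
    exact mul_le_mul hbx h3 (by linarith) (by linarith)

lemma aux_strict {ι : Type*} [DecidableEq ι] (a b : ι → ℤ) (s : Finset ι)
    (ha : ∀ i ∈ s, 2 ≤ a i) (hab : ∀ i ∈ s, a i ≤ b i) (hc : 2 ≤ s.card)
    (x : ι) (hx : x ∈ s) (hlt : a x < b x) :
    (∏ i ∈ s, a i - ∏ i ∈ s, (a i - 1)) < (∏ i ∈ s, b i - ∏ i ∈ s, (b i - 1)) := by
  obtain ⟨h0, h1, h2, h3, h4⟩ := aux_mono a b (s.erase x)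
    (fun i hi => ha i (Finset.mem_of_mem_erase hi))
    (fun i hi => hab i (Finset.mem_of_mem_erase hi))
  have hne : (s.erase x).Nonempty := by
    rw [← Finset.card_pos, Finset.card_erase_of_mem hx]; omega
  have h5 := h4 hne
  have hax := ha x hx
  rw [← Finset.mul_prod_erase s a hx, ← Finset.mul_prod_erase s b hx,
    ← Finset.mul_prod_erase s (fun i => a i - 1) hx,
    ← Finset.mul_prod_erase s (fun i => b i - 1) hx]
  generalize ∏ i ∈ s.erase x, a i = A at *
  generalize ∏ i ∈ s.erase x, b i = B at *
  generalize ∏ i ∈ s.erase x, (a i - 1) = A' at *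
  generalize ∏ i ∈ s.erase x, (b i - 1) = B' at *
  have e2 : (a x - 1) * (A - A') < (b x - 1) * (A - A') :=
    mul_lt_mul_of_pos_right (by linarith) h5
  have e3 : (b x - 1) * (A - A') ≤ (b x - 1) * (B - B') :=
    mul_le_mul_of_nonneg_left h1 (by linarith)
  linarith

/-- Lemma 2.7: for any `k`-element subset `s` of the first `t` (increasing) primes,
`∏_{i ∈ s} p_i − φ(∏_{i ∈ s} p_i) ≥ p₁⋯p_k − φ(p₁⋯p_k)`, with equality iff
`k = 1` or `s` consists of the first `k` indices. -/
theorem prod_sub_totient_ge (t k : ℕ) (p : ℕ → ℕ) (ht : 1 ≤ t)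
    (hp : ∀ i, i < t → (p i).Prime)
    (hlt : ∀ i j, i < j → j < t → p i < p j)
    (s : Finset ℕ) (hs : s ⊆ Finset.range t) (hcard : s.card = k) :
    ((∏ i ∈ Finset.range k, (p i : ℤ)) - (Nat.totient (∏ i ∈ Finset.range k, p i) : ℤ) ≤
      (∏ i ∈ s, (p i : ℤ)) - (Nat.totient (∏ i ∈ s, p i) : ℤ)) ∧
    ((∏ i ∈ s, (p i : ℤ)) - (Nat.totient (∏ i ∈ s, p i) : ℤ) =
        (∏ i ∈ Finset.range k, (p i : ℤ)) - (Nat.totient (∏ i ∈ Finset.range k, p i) : ℤ) ↔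
      (k = 1 ∨ s = Finset.range k)) := by
  have hkt : k ≤ t := by
    have := Finset.card_le_card hs
    simpa [hcard] using this
  have hinj : ∀ i < t, ∀ j < t, p i = p j → i = j := by
    intro i hi j hj h
    rcases lt_trichotomy i j with h' | h' | h'
    · have := hlt i j h' hj; omega
    · exact h'
    · have := hlt j i h' hi; omega
  have hst : ∀ i ∈ s, i < t := fun i hi => Finset.mem_range.1 (hs hi)
  have hrt : ∀ i ∈ Finset.range k, i < t := fun i hi =>
    lt_of_lt_of_le (Finset.mem_range.1 hi) hkt
  rw [aux_totient p s (fun i hi => hp i (hst i hi))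
      (fun i hi j hj => hinj i (hst i hi) j (hst j hj)),
    aux_totient p (Finset.range k) (fun i hi => hp i (hrt i hi))
      (fun i hi j hj => hinj i (hrt i hi) j (hrt j hj))]
  let e := s.orderEmbOfFin hcard
  have hes : ∀ j, e j ∈ s := fun j => Finset.orderEmbOfFin_mem s hcard j
  have him : Finset.univ.map e.toEmbedding = s := by
    apply Finset.eq_of_subset_of_card_le
    · intro x hx
      obtain ⟨j, -, rfl⟩ := Finset.mem_map.1 hx
      exact hes j
    · simp [hcard]
  have hprod : ∀ f : ℕ → ℤ, ∏ i ∈ s, f i = ∏ j : Fin k, f (e j) := by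
    intro f
    conv_lhs => rw [← him]
    rw [Finset.prod_map]
    rfl
  have hle : ∀ (n : ℕ) (hn : n < k), n ≤ e ⟨n, hn⟩ := by
    intro n
    induction n with
    | zero => intro _; exact Nat.zero_le _
    | succ n ih =>
      intro hn
      have h1 := ih (by omega)
      have h2 : e ⟨n, by omega⟩ < e ⟨n + 1, hn⟩ := e.strictMono (by simp [Fin.lt_def])
      omega
  have h2 : ∀ j ∈ (Finset.univ : Finset (Fin k)), (2 : ℤ) ≤ (p (j : ℕ) : ℤ) := fun j _ => by
    exact_mod_cast (hp j (by omega)).two_le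
  have hab : ∀ j ∈ (Finset.univ : Finset (Fin k)), (p (j : ℕ) : ℤ) ≤ (p (e j) : ℤ) := fun j _ => by
    rcases (hle j j.2).lt_or_eq with h | h
    · exact_mod_cast (hlt _ _ h (hst _ (hes j))).le
    · exact le_of_eq (by rw [show e j = (j : ℕ) from h.symm])
  rw [hprod, hprod, Finset.prod_range, Finset.prod_range]
  refine ⟨(aux_mono _ _ Finset.univ h2 hab).2.1, ?_, ?_⟩
  · intro h
    by_contra hcon
    push Not at hcon
    obtain ⟨hk1, hsr⟩ := hcon
    have hex : ∃ j : Fin k, (j : ℕ) < e j := by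
      by_contra hno
      push Not at hno
      apply hsr
      apply Finset.eq_of_subset_of_card_le
      · intro x hx
        rw [← him] at hx
        obtain ⟨j, -, rfl⟩ := Finset.mem_map.1 hx
        exact Finset.mem_range.2 (lt_of_le_of_lt (hno j) j.2)
      · simp [hcard]
    obtain ⟨j, hj⟩ := hex
    have hk2 : 2 ≤ k := by have := j.2; omega
    have := aux_strict _ _ Finset.univ h2 hab (by simpa using hk2) j (Finset.mem_univ j)
      (by exact_mod_cast hlt _ _ hj (hst _ (hes j)))
    exact absurd h this.ne'
  · rintro (h | h)
    · subst h
      simp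
    · rw [← hprod (fun i => (p i : ℤ)), ← hprod (fun i => (p i : ℤ) - 1), h,
        Finset.prod_range, Finset.prod_range]
end

section
/- Let n = p_1^{n_1} p_2^{n_2} ⋯ p_r^{n_r}, where r ≥ 3, n_1,…,n_r are positive integers and p_1 < p_2 < ⋯ < p_r are primes. Then α_1(n) > α_2(n) > ⋯ > α_r(n), where for 1 ≤ j ≤ r, α_j(n) := φ(n) + (n/(p_1⋯p_r))·[(p_1⋯p_r)/p_j − φ((p_1⋯p_r)/p_j)]. -/
/-- `α_j(n) = φ(n) + (n/(p₁⋯p_r))·[(p₁⋯p_r)/p_j − φ((p₁⋯p_r)/p_j)]` (0-based index `j`). -/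
def alphaJ (n r : ℕ) (p e : ℕ → ℕ) (j : ℕ) : ℤ :=
  (Nat.totient n : ℤ) + (∏ i ∈ Finset.range r, (p i : ℤ) ^ (e i - 1)) *
    ((∏ i ∈ Finset.range r \ {j}, (p i : ℤ)) -
      (Nat.totient (∏ i ∈ Finset.range r \ {j}, p i) : ℤ))

theorem alphaJ_aux (r : ℕ) (p : ℕ → ℕ)
    (hp : ∀ i, i < r → (p i).Prime)
    (hne : ∀ i j, i < r → j < r → i ≠ j → p i ≠ p j)
    (j k : ℕ) (hjk : j ≠ k) (hk : k < r) :
    (∏ i ∈ Finset.range r \ {j}, p i) = p k * ∏ i ∈ Finset.range r \ {j, k}, p i ∧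
    Nat.totient (∏ i ∈ Finset.range r \ {j}, p i) =
      (p k - 1) * Nat.totient (∏ i ∈ Finset.range r \ {j, k}, p i) := by
  have hS : Finset.range r \ {j} = insert k (Finset.range r \ {j, k}) := by
    ext x
    simp only [Finset.mem_sdiff, Finset.mem_range, Finset.mem_singleton, Finset.mem_insert]
    grind
  have h1 : (∏ i ∈ Finset.range r \ {j}, p i) = p k * ∏ i ∈ Finset.range r \ {j, k}, p i := by
    rw [hS, Finset.prod_insert (by simp)]
  refine ⟨h1, ?_⟩
  rw [h1, Nat.totient_mul, Nat.totient_prime (hp k hk)]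
  apply Nat.Coprime.prod_right
  intro i hi
  simp only [Finset.mem_sdiff, Finset.mem_range, Finset.mem_singleton, Finset.mem_insert,
    not_or] at hi
  exact (Nat.coprime_primes (hp k hk) (hp i hi.1)).2 (hne k i hk hi.1 (Ne.symm hi.2.2))

/-- Lemma 3.2: `α₁(n) > α₂(n) > ⋯ > α_r(n)` for `r ≥ 3`. -/
theorem alphaJ_strict_anti (n r : ℕ) (p e : ℕ → ℕ) (hr : 3 ≤ r)
    (hp : ∀ i, i < r → (p i).Prime)
    (hlt : ∀ i j, i < j → j < r → p i < p j)
    (he : ∀ i, i < r → 0 < e i)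
    (hn : n = ∏ i ∈ Finset.range r, p i ^ e i) :
    ∀ j k, j < k → k < r → alphaJ n r p e k < alphaJ n r p e j := by
  intro j k hjk hk
  have hj : j < r := hjk.trans hk
  have hne : ∀ i j, i < r → j < r → i ≠ j → p i ≠ p j := by
    intro a b ha hb hab
    rcases lt_or_gt_of_ne hab with h | h
    · exact (hlt a b h hb).ne
    · exact (hlt b a h ha).ne'
  obtain ⟨a1, a2⟩ := alphaJ_aux r p hp hne j k hjk.ne hk
  obtain ⟨b1, b2⟩ := alphaJ_aux r p hp hne k j hjk.ne' hj
  rw [Finset.pair_comm k j] at b1 b2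
  set M := ∏ i ∈ Finset.range r \ {j, k}, p i with hM
  have hpos : 0 < M := Finset.prod_pos fun i hi =>
    (hp i (by simp at hi; exact hi.1)).pos
  obtain ⟨m, hm, hmj, hmk⟩ : ∃ m, m < r ∧ m ≠ j ∧ m ≠ k := by
    by_contra! h
    have h0 := h 0 (by omega)
    have h1 := h 1 (by omega)
    have h2 := h 2 (by omega)
    omega
  have hdvd : p m ∣ M := Finset.dvd_prod_of_mem p (by simp [hm, hmj, hmk])
  have hM1 : 1 < M := lt_of_lt_of_le (hp m hm).one_lt (Nat.le_of_dvd hpos hdvd)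
  have hF : Nat.totient M < M := Nat.totient_lt M hM1
  have hC : (0 : ℤ) < ∏ i ∈ Finset.range r, (p i : ℤ) ^ (e i - 1) := by
    apply Finset.prod_pos
    intro i hi
    have := (hp i (Finset.mem_range.1 hi)).pos
    positivity
  unfold alphaJ
  rw [← Nat.cast_prod, ← Nat.cast_prod, a2, b2, a1, b1]
  have hj1 := (hp j hj).one_le
  have hk1 := (hp k hk).one_le
  have hpjk : (p j : ℤ) < p k := by exact_mod_cast hlt j k hjk hk
  have hFz : (Nat.totient M : ℤ) < M := by exact_mod_cast hF
  clear_value M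
  rw [Nat.cast_mul, Nat.cast_mul, Nat.cast_mul, Nat.cast_mul, Nat.cast_sub hj1, Nat.cast_sub hk1]
  refine add_lt_add_right (mul_lt_mul_of_pos_left ?_ hC) _
  push_cast
  nlinarith [mul_pos (sub_pos.2 hpjk) (sub_pos.2 hFz)]
end

section
/- Let n = p_1^{n_1} p_2^{n_2} ⋯ p_r^{n_r}, where r ≥ 3, n_1,…,n_r are positive integers and p_1 < p_2 < ⋯ < p_r are primes, and let j ∈ {1,…,r}. Define α_j(n) := φ(n) + (n/(p_1⋯p_r))·[(p_1⋯p_r)/p_j − φ((p_1⋯p_r)/p_j)] and β_j(n) := φ(n) + (n/(p_1⋯p_r))·(1/p_j^{n_j−1})·[(p_1⋯p_r)/p_j + φ((p_1⋯p_r)/p_j)·(p_j^{n_j−1} − 2)]. Then: (i) α_j(n) = β_j(n) if and only if n_j = 1; (ii) α_j(n) < β_j(n) if and only if n_j ≥ 2 and 2·φ((p_1⋯p_r)/p_j) > (p_1⋯p_r)/p_j; (iii) α_j(n) > β_j(n) if and only if n_j ≥ 2 and 2·φ((p_1⋯p_r)/p_j) < (p_1⋯p_r)/p_j. -/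
/-- `β_j(n) = φ(n) + (n/(p₁⋯p_r))·(1/p_j^(n_j-1))·[(p₁⋯p_r)/p_j +
φ((p₁⋯p_r)/p_j)·(p_j^(n_j-1) − 2)]` (0-based index `j`). -/
def betaJ (n r : ℕ) (p e : ℕ → ℕ) (j : ℕ) : ℤ :=
  (Nat.totient n : ℤ) + (∏ i ∈ Finset.range r \ {j}, (p i : ℤ) ^ (e i - 1)) *
    ((∏ i ∈ Finset.range r \ {j}, (p i : ℤ)) +
      (Nat.totient (∏ i ∈ Finset.range r \ {j}, p i) : ℤ) * ((p j : ℤ) ^ (e j - 1) - 2))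

/-- Lemma 3.3: comparison of `α_j(n)` and `β_j(n)` for `r ≥ 3`. -/
theorem alphaJ_betaJ_trichotomy (n r : ℕ) (p e : ℕ → ℕ) (hr : 3 ≤ r)
    (hp : ∀ i, i < r → (p i).Prime)
    (hlt : ∀ i j, i < j → j < r → p i < p j)
    (he : ∀ i, i < r → 0 < e i)
    (hn : n = ∏ i ∈ Finset.range r, p i ^ e i)
    (j : ℕ) (hj : j < r) :
    (alphaJ n r p e j = betaJ n r p e j ↔ e j = 1) ∧
    (alphaJ n r p e j < betaJ n r p e j ↔
      2 ≤ e j ∧ (∏ i ∈ Finset.range r \ {j}, p i) < 2 * Nat.totient (∏ i ∈ Finset.range r \ {j}, p i)) ∧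
    (betaJ n r p e j < alphaJ n r p e j ↔
      2 ≤ e j ∧ 2 * Nat.totient (∏ i ∈ Finset.range r \ {j}, p i) < (∏ i ∈ Finset.range r \ {j}, p i)) := by
  have hjm : j ∈ Finset.range r := Finset.mem_range.2 hj
  -- the product over the other indices
  have hE : (∏ i ∈ Finset.range r, (p i : ℤ) ^ (e i - 1)) =
      (p j : ℤ) ^ (e j - 1) * ∏ i ∈ Finset.range r \ {j}, (p i : ℤ) ^ (e i - 1) := by
    rw [Finset.sdiff_singleton_eq_erase]
    exact (Finset.mul_prod_erase _ (fun i => (p i : ℤ) ^ (e i - 1)) hjm).symm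
  have hEpos : 0 < ∏ i ∈ Finset.range r \ {j}, (p i : ℤ) ^ (e i - 1) := by
    apply Finset.prod_pos
    intro i hi
    have h1 : i < r := Finset.mem_range.1 (Finset.mem_sdiff.1 hi).1
    have := (hp i h1).pos
    positivity
  have hsq : Squarefree (∏ i ∈ Finset.range r \ {j}, p i) := by
    apply Finset.squarefree_prod_of_pairwise_isCoprime
    · intro a ha b hb hab
      have h1 : a < r := by simp at ha; exact ha.1
      have h2 : b < r := by simp at hb; exact hb.1
      have hne : p a ≠ p b := by
        rcases lt_or_gt_of_ne hab with h | h
        · exact (hlt a b h h2).ne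
        · exact (hlt b a h h1).ne'
      exact Nat.coprime_iff_isRelPrime.1 ((Nat.coprime_primes (hp a h1) (hp b h2)).2 hne)
    · intro i hi
      exact (hp i (Finset.mem_range.1 (Finset.mem_sdiff.1 hi).1)).prime.squarefree
  have hbig : 2 < ∏ i ∈ Finset.range r \ {j}, p i := by
    obtain ⟨k, hk0, hkr, hkj⟩ : ∃ k, 0 < k ∧ k < r ∧ k ≠ j := by
      by_cases h : j = 1
      · exact ⟨2, by omega, by omega, by omega⟩
      · exact ⟨1, by omega, by omega, by omega⟩
    have h1 := hlt 0 k hk0 hkr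
    have h2 := (hp 0 (by omega)).two_le
    have h3 : p k ∣ ∏ i ∈ Finset.range r \ {j}, p i :=
      Finset.dvd_prod_of_mem p (by simp [hkr, hkj])
    have := Nat.le_of_dvd (Nat.pos_of_ne_zero hsq.ne_zero) h3
    omega
  have hne : 2 * Nat.totient (∏ i ∈ Finset.range r \ {j}, p i) ≠
      ∏ i ∈ Finset.range r \ {j}, p i := by
    intro h
    obtain ⟨c, hc⟩ := Nat.totient_even hbig
    have h4 : 2 * 2 ∣ ∏ i ∈ Finset.range r \ {j}, p i := ⟨c, by omega⟩
    have := hsq 2 h4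
    simp at this
  have hpj := (hp j hj).two_le
  have hej := he j hj
  have hq1 : e j = 1 → (p j : ℤ) ^ (e j - 1) = 1 := by
    intro h; simp [h]
  have hq2 : 2 ≤ e j → 1 < (p j : ℤ) ^ (e j - 1) := by
    intro h
    exact one_lt_pow₀ (by exact_mod_cast hpj) (by omega)
  have hd : alphaJ n r p e j - betaJ n r p e j =
      (∏ i ∈ Finset.range r \ {j}, (p i : ℤ) ^ (e i - 1)) * ((p j : ℤ) ^ (e j - 1) - 1) *
      (((∏ i ∈ Finset.range r \ {j}, p i : ℕ) : ℤ) -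
        2 * (Nat.totient (∏ i ∈ Finset.range r \ {j}, p i) : ℤ)) := by
    unfold alphaJ betaJ
    rw [hE]
    push_cast
    ring
  generalize alphaJ n r p e j = A at *
  generalize betaJ n r p e j = B at *
  generalize Nat.totient (∏ i ∈ Finset.range r \ {j}, p i) = t at *
  generalize (∏ i ∈ Finset.range r \ {j}, p i) = P at *
  generalize (∏ i ∈ Finset.range r \ {j}, (p i : ℤ) ^ (e i - 1)) = E at *
  rcases (show e j = 1 ∨ 2 ≤ e j by omega) with h | h
  · rw [hq1 h] at hd
    have : A = B := by linarith
    omega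
  · have hc : 0 < E * ((p j : ℤ) ^ (e j - 1) - 1) :=
      mul_pos hEpos (by linarith [hq2 h])
    rcases lt_or_gt_of_ne hne with h' | h'
    · have : 0 < A - B := by
        rw [hd]; exact mul_pos hc (by omega)
      omega
    · have : A - B < 0 := by
        rw [hd]; exact mul_neg_of_pos_of_neg hc (by omega)
      omega
end

section
/- Let n = p_1^{n_1} p_2^{n_2} ⋯ p_r^{n_r}, where r ≥ 3, n_1,…,n_r are positive integers and p_1 < p_2 < ⋯ < p_r are primes. For distinct a, b ∈ {1,…,r}, define γ_{a,b}(n) := φ(n) + (n/(p_1⋯p_r))·[φ((p_1⋯p_r)/p_a) + φ((p_1⋯p_r)/p_b) + (p_1⋯p_r)/(p_a p_b) − φ((p_1⋯p_r)/(p_a p_b))]. Then for all distinct a, b ∈ {1,…,r} with {a, b} ≠ {r−1, r}, we have γ_{a,b}(n) > γ_{r−1,r}(n). -/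
/-- `γ_{a,b}(n) = φ(n) + (n/(p₁⋯p_r))·[φ((p₁⋯p_r)/p_a) + φ((p₁⋯p_r)/p_b) +
(p₁⋯p_r)/(p_a p_b) − φ((p₁⋯p_r)/(p_a p_b))]` (0-based indices). -/
def gammaAB (n r : ℕ) (p e : ℕ → ℕ) (a b : ℕ) : ℤ :=
  (Nat.totient n : ℤ) + (∏ i ∈ Finset.range r, (p i : ℤ) ^ (e i - 1)) *
    ((Nat.totient (∏ i ∈ Finset.range r \ {a}, p i) : ℤ) +
      (Nat.totient (∏ i ∈ Finset.range r \ {b}, p i) : ℤ) +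
      (∏ i ∈ Finset.range r \ ({a, b} : Finset ℕ), (p i : ℤ)) -
      (Nat.totient (∏ i ∈ Finset.range r \ ({a, b} : Finset ℕ), p i) : ℤ))

theorem totient_prod_aux (p : ℕ → ℕ) (S : Finset ℕ) (hp : ∀ i ∈ S, (p i).Prime)
    (hinj : ∀ i ∈ S, ∀ j ∈ S, i ≠ j → p i ≠ p j) :
    Nat.totient (∏ i ∈ S, p i) = ∏ i ∈ S, (p i - 1) := by
  induction S using Finset.induction_on with
  | empty => simp
  | insert a S ha ih =>
    rw [Finset.prod_insert ha, Finset.prod_insert ha, Nat.totient_mul, ih,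
      Nat.totient_prime (hp a (by simp))]
    · intro i hi
      exact hp i (by simp [hi])
    · intro i hi j hj
      exact hinj i (by simp [hi]) j (by simp [hj])
    · apply Nat.Coprime.prod_right
      intro i hi
      rw [Nat.coprime_primes (hp a (by simp)) (hp i (by simp [hi]))]
      exact hinj a (by simp) i (by simp [hi]) (by rintro rfl; exact ha hi)

theorem gammaAB_comm (n r : ℕ) (p e : ℕ → ℕ) (a b : ℕ) :
    gammaAB n r p e a b = gammaAB n r p e b a := by
  unfold gammaAB
  rw [Finset.pair_comm a b]
  ring

theorem gammaAB_step (n r : ℕ) (p e : ℕ → ℕ)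
    (hp : ∀ i, i < r → (p i).Prime)
    (hlt : ∀ i j, i < j → j < r → p i < p j)
    (a b c : ℕ) (hac : a < c) (hc : c < r) (hb : b < r) (hab : a ≠ b) (hbc : b ≠ c) :
    gammaAB n r p e c b < gammaAB n r p e a b := by
  have ha : a < r := hac.trans hc
  have hinj : ∀ i < r, ∀ j < r, i ≠ j → p i ≠ p j := by
    intro i hi j hj hij
    rcases lt_or_gt_of_ne hij with h | h
    · exact (hlt i j h hj).ne
    · exact (hlt j i h hi).ne'
  have tot : ∀ T : Finset ℕ, Nat.totient (∏ i ∈ Finset.range r \ T, p i)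
      = ∏ i ∈ Finset.range r \ T, (p i - 1) := by
    intro T
    apply totient_prod_aux
    · intro i hi
      simp at hi
      exact hp i hi.1
    · intro i hi j hj
      simp at hi hj
      exact hinj i hi.1 j hj.1
  unfold gammaAB
  simp only [tot]
  have hac' : a ≠ c := hac.ne
  set S := Finset.range r \ {a, b, c} with hS
  have aS : a ∉ S := by simp [hS]
  have bS : b ∉ S := by simp [hS]
  have cS : c ∉ S := by simp [hS]
  have e1 : Finset.range r \ {a} = insert b (insert c S) := by
    ext i; simp [hS]; grind
  have e2 : Finset.range r \ {b} = insert a (insert c S) := by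
    ext i; simp [hS]; grind
  have e3 : Finset.range r \ {c} = insert a (insert b S) := by
    ext i; simp [hS]; grind
  have e4 : Finset.range r \ {a, b} = insert c S := by
    ext i; simp [hS]; grind
  have e5 : Finset.range r \ {c, b} = insert a S := by
    ext i; simp [hS]; grind
  rw [e1, e2, e3, e4, e5]
  have i1 : b ∉ insert c S := by simp [bS, hbc]
  have i2 : a ∉ insert c S := by simp [aS, hac']
  have i3 : a ∉ insert b S := by simp [aS, hab]
  simp only [Finset.prod_insert i1, Finset.prod_insert i2, Finset.prod_insert i3,
    Finset.prod_insert aS, Finset.prod_insert bS, Finset.prod_insert cS]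
  have hM : 0 < ∏ i ∈ Finset.range r, (p i : ℤ) ^ (e i - 1) := by
    apply Finset.prod_pos
    intro i hi
    have := (hp i (Finset.mem_range.1 hi)).pos
    positivity
  have hQ : 0 < ∏ i ∈ S, (p i : ℤ) := by
    apply Finset.prod_pos
    intro i hi
    simp [hS] at hi
    have := (hp i hi.1).pos
    positivity
  push_cast [Nat.cast_sub (hp a ha).one_le, Nat.cast_sub (hp b hb).one_le,
    Nat.cast_sub (hp c hc).one_le]
  have hf : 0 ≤ ∏ i ∈ S, ((p i - 1 : ℕ) : ℤ) := Finset.prod_nonneg (by intros; positivity)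
  generalize (∏ i ∈ S, ((p i - 1 : ℕ) : ℤ)) = f at *
  generalize (∏ i ∈ S, (p i : ℤ)) = Q at *
  have hxy : (0 : ℤ) < p c - p a := by
    have := hlt a c hac hc
    omega
  have hz : (0 : ℤ) ≤ p b - 2 := by
    have := (hp b hb).two_le
    omega
  have key : 0 < ((p c : ℤ) - p a) * (Q + f * (p b - 2)) := by positivity
  gcongr ?_ + ?_ * ?_
  linarith

/-- Proposition 3.8: `γ_{a,b}(n) > γ_{r-1,r}(n)` whenever `{a,b} ≠ {r-1,r}`
(0-based: `{a,b} ≠ {r-2,r-1}`). -/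
theorem gammaAB_gt (n r : ℕ) (p e : ℕ → ℕ) (hr : 3 ≤ r)
    (hp : ∀ i, i < r → (p i).Prime)
    (hlt : ∀ i j, i < j → j < r → p i < p j)
    (he : ∀ i, i < r → 0 < e i)
    (hn : n = ∏ i ∈ Finset.range r, p i ^ e i)
    (a b : ℕ) (ha : a < r) (hb : b < r) (hab : a ≠ b)
    (hne : ({a, b} : Finset ℕ) ≠ {r - 2, r - 1}) :
    gammaAB n r p e (r - 2) (r - 1) < gammaAB n r p e a b := by
  have main : ∀ a b, a < b → b < r → ({a, b} : Finset ℕ) ≠ {r - 2, r - 1} →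
      gammaAB n r p e (r - 2) (r - 1) < gammaAB n r p e a b := by
    intro a b hab hb hne
    have h1 : gammaAB n r p e a (r - 1) ≤ gammaAB n r p e a b := by
      rcases eq_or_ne b (r - 1) with h | h
      · rw [h]
      · rw [gammaAB_comm n r p e a, gammaAB_comm n r p e a]
        exact (gammaAB_step n r p e hp hlt b a (r - 1) (by omega) (by omega) (by omega)
          (by omega) (by omega)).le
    rcases eq_or_ne a (r - 2) with h | h
    · exfalso
      apply hne
      rw [h, show b = r - 1 by omega]
    · exact (gammaAB_step n r p e hp hlt a (r - 1) (r - 2) (by omega) (by omega) (by omega)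
          (by omega) (by omega)).trans_le h1
  rcases lt_or_gt_of_ne hab with h | h
  · exact main a b h hb hne
  · rw [gammaAB_comm n r p e a b]
    exact main b a h ha (by rwa [Finset.pair_comm])
end

section
/- Let n = p_1^{n_1} p_2^{n_2} ⋯ p_r^{n_r}, where r ≥ 3, n_1,…,n_r are positive integers and p_1 < p_2 < ⋯ < p_r are primes. Define α(n) := φ(n) + (n/(p_1⋯p_r))·[p_1⋯p_{r-1} − φ(p_1⋯p_{r-1})], β(n) := φ(n) + (n/(p_1⋯p_r))·(1/p_r^{n_r−1})·[p_1⋯p_{r-1} + φ(p_1⋯p_{r-1})·(p_r^{n_r−1} − 2)], and γ(n) := φ(n) + (n/(p_1⋯p_r))·[φ(p_1⋯p_{r-1}) + φ(p_1⋯p_{r-2}p_r) + p_1⋯p_{r-2} − φ(p_1⋯p_{r-2})]. Then: (i) if n_r ≥ 2, then β(n) < γ(n); (ii) α(n) ≤ γ(n) if and only if (2 + (p_r − 2)/(p_{r-1} − 1))·φ(p_1⋯p_{r-2}) ≥ p_1⋯p_{r-2} (equivalently, (2(p_{r-1} − 1) + p_r − 2)·φ(p_1⋯p_{r-2}) ≥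 (p_{r-1} − 1)·p_1⋯p_{r-2}). -/
/-- Proposition 3.9: (i) if `n_r ≥ 2` then `β(n) < γ(n)`;
(ii) `α(n) ≤ γ(n)` iff `(2(p_{r-1} − 1) + p_r − 2)·φ(p₁⋯p_{r-2}) ≥ (p_{r-1} − 1)·p₁⋯p_{r-2}`. -/
theorem beta_lt_gamma_and_alpha_le_gamma_iff (n r : ℕ) (p e : ℕ → ℕ) (hr : 3 ≤ r)
    (hp : ∀ i, i < r → (p i).Prime)
    (hlt : ∀ i j, i < j → j < r → p i < p j)
    (he : ∀ i, i < r → 0 < e i)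
    (hn : n = ∏ i ∈ Finset.range r, p i ^ e i) :
    (2 ≤ e (r - 1) →
      ((Nat.totient n : ℤ) +
      (∏ i ∈ Finset.range (r - 1), (p i : ℤ) ^ (e i - 1)) *
        ((∏ i ∈ Finset.range (r - 1), (p i : ℤ)) + (Nat.totient (∏ i ∈ Finset.range (r - 1), p i) : ℤ) * ((p (r - 1) : ℤ) ^ (e (r - 1) - 1) - 2))) <
      ((Nat.totient n : ℤ) +
      (∏ i ∈ Finset.range r, (p i : ℤ) ^ (e i - 1)) *
        ((Nat.totient (∏ i ∈ Finset.range (r - 1), p i) : ℤ) + (Nat.totient ((∏ i ∈ Finset.range (r - 2), p i) * p (r - 1)) : ℤ) + (∏ i ∈ Finset.range (r - 2), (p i : ℤ)) - (Nat.totient (∏ i ∈ Finset.range (r - 2), p i) : ℤ)))) ∧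
    (((Nat.totient n : ℤ) +
      (∏ i ∈ Finset.range r, (p i : ℤ) ^ (e i - 1)) *
        ((∏ i ∈ Finset.range (r - 1), (p i : ℤ)) - (Nat.totient (∏ i ∈ Finset.range (r - 1), p i) : ℤ))) ≤
      ((Nat.totient n : ℤ) +
      (∏ i ∈ Finset.range r, (p i : ℤ) ^ (e i - 1)) *
        ((Nat.totient (∏ i ∈ Finset.range (r - 1), p i) : ℤ) + (Nat.totient ((∏ i ∈ Finset.range (r - 2), p i) * p (r - 1)) : ℤ) + (∏ i ∈ Finset.range (r - 2), (p i : ℤ)) - (Nat.totient (∏ i ∈ Finset.range (r - 2), p i) : ℤ))) ↔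
      ((p (r - 2) : ℤ) - 1) * (∏ i ∈ Finset.range (r - 2), (p i : ℤ)) ≤
        (2 * ((p (r - 2) : ℤ) - 1) + (p (r - 1) : ℤ) - 2) *
          (Nat.totient (∏ i ∈ Finset.range (r - 2), p i) : ℤ)) := by
  obtain ⟨s, rfl⟩ : ∃ s, r = s + 2 := ⟨r - 2, by omega⟩
  have e1 : s + 2 - 1 = s + 1 := by omega
  have e2 : s + 2 - 2 = s := by omega
  rw [e1, e2]
  have hcop : ∀ j, s ≤ j → j < s + 2 → Nat.Coprime (∏ i ∈ Finset.range s, p i) (p j) := by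
    intro j hj hj2
    apply Nat.Coprime.prod_left
    intro i hi
    have hi' := Finset.mem_range.mp hi
    exact (Nat.coprime_primes (hp i (by omega)) (hp j hj2)).2 (hlt i j (by omega) hj2).ne
  have hq := hp s (by omega)
  have ht := hp (s + 1) (by omega)
  have hqt := hlt s (s + 1) (by omega) (by omega)
  have hPpos : 0 < ∏ i ∈ Finset.range s, p i :=
    Finset.prod_pos fun i hi => (hp i (by have := Finset.mem_range.mp hi; omega)).pos
  have hFpos := Nat.totient_pos.2 hPpos
  have hA : 0 < ∏ i ∈ Finset.range (s + 1), (p i : ℤ) ^ (e i - 1) :=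
    Finset.prod_pos fun i hi => pow_pos
      (by exact_mod_cast (hp i (by have := Finset.mem_range.mp hi; omega)).pos) _
  rw [Finset.prod_range_succ (fun i => (p i : ℤ) ^ (e i - 1)) (s + 1),
    Finset.prod_range_succ (fun i => p i) s, Finset.prod_range_succ (fun i => (p i : ℤ)) s,
    Nat.totient_mul (hcop s le_rfl (by omega)), Nat.totient_mul (hcop (s + 1) (by omega) (by omega)),
    Nat.totient_prime hq, Nat.totient_prime ht]
  have hPc : (∏ i ∈ Finset.range s, (p i : ℤ)) = ((∏ i ∈ Finset.range s, p i : ℕ) : ℤ) := by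
    push_cast; rfl
  rw [hPc]
  push_cast [Nat.cast_sub hq.one_le, Nat.cast_sub ht.one_le]
  rw [← Nat.cast_prod]
  generalize (∏ i ∈ Finset.range (s + 1), (p i : ℤ) ^ (e i - 1)) = A at *
  generalize (∏ i ∈ Finset.range s, p i) = P at *
  have hT1 : 2 ≤ e (s + 1) → (p (s + 1) : ℤ) ≤ (p (s + 1) : ℤ) ^ (e (s + 1) - 1) := by
    intro h
    exact le_self_pow₀ (by exact_mod_cast ht.one_le) (by omega)
  have hT0 : 0 < (p (s + 1) : ℤ) ^ (e (s + 1) - 1) := pow_pos (by exact_mod_cast ht.pos) _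
  generalize (p (s + 1) : ℤ) ^ (e (s + 1) - 1) = T at *
  have hq2 : (2 : ℤ) ≤ p s := by exact_mod_cast hq.two_le
  have hqt' : (p s : ℤ) + 1 ≤ p (s + 1) := by exact_mod_cast hqt
  have hP' : (0 : ℤ) < P := by exact_mod_cast hPpos
  have hF' : (0 : ℤ) < P.totient := by exact_mod_cast hFpos
  generalize (p s : ℤ) = q at *
  generalize (p (s + 1) : ℤ) = t at *
  generalize (P.totient : ℤ) = F at *
  generalize (P : ℤ) = R at *
  constructor
  · intro h2
    have hT := hT1 h2
    rw [mul_assoc A T]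
    apply add_lt_add_right
    apply mul_lt_mul_of_pos_left _ hA
    have h1 : 0 < (T - q) * R := mul_pos (by linarith) hP'
    have h3 : 0 < T * (F * (t - 2)) := mul_pos hT0 (mul_pos hF' (by linarith))
    have h4 : 0 < F * (q - 1) := mul_pos hF' (by linarith)
    nlinarith
  · rw [add_le_add_iff_left, mul_le_mul_iff_right₀ (mul_pos hA hT0)]
    constructor <;> intro h <;> nlinarith
end
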